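/- arXiv:1011.2292 — 3 statements merged into one kernel-verified Lean document; each statement's English description precedes it below -/
import Mathlib

section
/- Let (R₊, R₋) be a cutting of R. Then the exact refinement indicator and the first-order refinement indicator satisfy the identity ΔJ = (λ² / 8) · (p / (p₊ · p₋)). -/
/-- Identity linking the exact refinement indicator ΔJ and the first-order
refinement indicator λ for a cutting (R₊, R₋) of a region R:
ΔJ = (λ²/8) · (p/(p₊ p₋)). -/
theorem exact_eq_first_order_identity {ι : Type*} [DecidableEq ι]
    (R Rp Rm : Finset ι) (d : ι → ℝ)
    (hRp : Rp.Nonempty) (hRm : Rm.Nonempty)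
    (hdisj : Disjoint Rp Rm) (hun : Rp ∪ Rm = R)
    (m cp cm ΔJ lam : ℝ)
    (hm : m = (∑ i ∈ R, d i) / R.card)
    (hcp : cp = (∑ i ∈ Rp, d i) / Rp.card)
    (hcm : cm = (∑ i ∈ Rm, d i) / Rm.card)
    (hJ : ΔJ = (1/2) * ∑ i ∈ R, (d i - m)^2
          - (1/2) * ((∑ i ∈ Rp, (d i - cp)^2) + ∑ i ∈ Rm, (d i - cm)^2))
    (hlam : lam = (∑ i ∈ Rp, (m - d i)) - ∑ i ∈ Rm, (m - d i)) :
    ΔJ = lam^2 / 8 * ((R.card : ℝ) / ((Rp.card : ℝ) * (Rm.card : ℝ))) := by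
  have hp : (0:ℝ) < Rp.card := by exact_mod_cast hRp.card_pos
  have hq : (0:ℝ) < Rm.card := by exact_mod_cast hRm.card_pos
  have hc : (R.card : ℝ) = Rp.card + Rm.card := by
    rw [← hun, Finset.card_union_of_disjoint hdisj]; push_cast; rfl
  have key : ∀ (S : Finset ι) (c : ℝ), ∑ i ∈ S, (d i - c)^2
      = ∑ i ∈ S, (d i)^2 - 2 * c * ∑ i ∈ S, d i + S.card * c^2 := by
    intro S c
    rw [Finset.mul_sum, ← Finset.sum_sub_distrib, ← nsmul_eq_mul, ← Finset.sum_const,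
      ← Finset.sum_add_distrib]
    exact Finset.sum_congr rfl fun i _ => by ring
  have hs : ∀ f : ι → ℝ, ∑ i ∈ R, f i = ∑ i ∈ Rp, f i + ∑ i ∈ Rm, f i := by
    intro f
    rw [← hun, Finset.sum_union hdisj]
  rw [hs, hc] at hm
  rw [hs, key, key, key, key] at hJ
  simp only [Finset.sum_sub_distrib, Finset.sum_const, nsmul_eq_mul] at hlam
  rw [hc]
  generalize (Rp.card : ℝ) = p at *
  generalize (Rm.card : ℝ) = q at *
  generalize ∑ i ∈ Rp, d i = a at *
  generalize ∑ i ∈ Rm, d i = b at *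
  have hpq : p + q ≠ 0 := by positivity
  have hp' := hp.ne'
  have hq' := hq.ne'
  rw [hJ, hlam, hm, hcp, hcm]
  field_simp
  ring
end

section
/- Let (R₊, R₋) be a cutting of R. Then λ²/(2p) ≤ ΔJ; more precisely, λ²/(2p) = (4 p₊ p₋ / p²) · ΔJ, and 4 p₊ p₋ / p² ≤ 1. -/
/-- For a cutting (R₊, R₋) of R: λ²/(2p) ≤ ΔJ; more precisely
λ²/(2p) = (4 p₊ p₋ / p²) · ΔJ, and 4 p₊ p₋ / p² ≤ 1. -/
theorem first_order_lower_bound {ι : Type*} [DecidableEq ι]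
    (R Rp Rm : Finset ι) (d : ι → ℝ)
    (hRp : Rp.Nonempty) (hRm : Rm.Nonempty)
    (hdisj : Disjoint Rp Rm) (hun : Rp ∪ Rm = R)
    (m cp cm ΔJ lam : ℝ)
    (hm : m = (∑ i ∈ R, d i) / R.card)
    (hcp : cp = (∑ i ∈ Rp, d i) / Rp.card)
    (hcm : cm = (∑ i ∈ Rm, d i) / Rm.card)
    (hJ : ΔJ = (1/2) * ∑ i ∈ R, (d i - m)^2
          - (1/2) * ((∑ i ∈ Rp, (d i - cp)^2) + ∑ i ∈ Rm, (d i - cm)^2))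
    (hlam : lam = (∑ i ∈ Rp, (m - d i)) - ∑ i ∈ Rm, (m - d i)) :
    lam^2 / (2 * (R.card : ℝ)) ≤ ΔJ ∧
    lam^2 / (2 * (R.card : ℝ))
      = 4 * (Rp.card : ℝ) * (Rm.card : ℝ) / ((R.card : ℝ))^2 * ΔJ ∧
    4 * (Rp.card : ℝ) * (Rm.card : ℝ) / ((R.card : ℝ))^2 ≤ 1 := by
  subst hun
  have ha : (0 : ℝ) < Rp.card := by exact_mod_cast hRp.card_pos
  have hb : (0 : ℝ) < Rm.card := by exact_mod_cast hRm.card_pos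
  have hexp : ∀ (S : Finset ι) (c : ℝ), ∑ i ∈ S, (d i - c)^2
      = ∑ i ∈ S, (d i)^2 - 2 * c * ∑ i ∈ S, d i + S.card * c^2 := by
    intro S c
    simp only [sub_sq, Finset.sum_add_distrib, Finset.sum_sub_distrib, Finset.sum_const,
      nsmul_eq_mul, Finset.mul_sum]
    congr 2
    exact Finset.sum_congr rfl fun i _ => by ring
  have hcard : ((Rp ∪ Rm).card : ℝ) = Rp.card + Rm.card := by
    rw [Finset.card_union_of_disjoint hdisj]; push_cast; rfl
  rw [Finset.sum_union hdisj, hcard] at hm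
  rw [Finset.sum_union hdisj, hexp, hexp, hexp, hexp] at hJ
  simp only [Finset.sum_sub_distrib, Finset.sum_const, nsmul_eq_mul] at hlam
  rw [hcard]
  generalize (Rp.card : ℝ) = a at *
  generalize (Rm.card : ℝ) = b at *
  have hSp : ∑ i ∈ Rp, d i = a * cp := by rw [hcp]; field_simp
  have hSm : ∑ i ∈ Rm, d i = b * cm := by rw [hcm]; field_simp
  rw [hSp, hSm] at hm hJ hlam
  have hab : 0 < a + b := by positivity
  have hJ2 : ΔJ = a * b / (2 * (a + b)) * (cp - cm)^2 := by
    rw [hJ, hm]; field_simp; ring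
  have hl2 : lam = 2 * a * b * (cm - cp) / (a + b) := by
    rw [hlam, hm]; field_simp; ring
  have h3 : 4 * a * b / (a + b)^2 ≤ 1 := by
    rw [div_le_one (by positivity)]; nlinarith [sq_nonneg (a - b)]
  have h2 : lam^2 / (2 * (a + b)) = 4 * a * b / (a + b)^2 * ΔJ := by
    rw [hJ2, hl2]; field_simp; ring
  have h0 : 0 ≤ ΔJ := by rw [hJ2]; positivity
  exact ⟨by rw [h2]; exact mul_le_of_le_one_left h0 h3, h2, h3⟩
end

section
/- Suppose d is not constant on R (and |R| ≥ 2). Then the sets R₊ = {i ∈ R : d_i ≤ m} and R₋ = {i ∈ R : d_i > m} are both nonempty, so they form a cutting of R, and its exact refinement indicator satisfies ΔJ ≥ (∑_{i∈R} |m − d_i|)² / (2p) > 0. In particular, every region on which the image is not constant admits a cutting strictly decreasing the least-squares misfit. -/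
theorem aux_var {ι : Type*} (S : Finset ι) (hS : S.Nonempty) (d : ι → ℝ) (m : ℝ) :
    ∑ i ∈ S, (d i - m)^2 - ∑ i ∈ S, (d i - (∑ i ∈ S, d i) / S.card)^2
      = (∑ i ∈ S, (d i - m))^2 / S.card := by
  have h : (S.card : ℝ) ≠ 0 := by exact_mod_cast hS.card_pos.ne'
  simp only [sub_sq, Finset.sum_add_distrib, Finset.sum_sub_distrib, Finset.sum_const,
    nsmul_eq_mul, ← Finset.sum_mul, ← Finset.mul_sum]
  field_simp
  ring

theorem aux_cs (A B a b : ℝ) (ha : 0 < a) (hb : 0 < b) :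
    (A + B)^2 / (a + b) ≤ A^2 / a + B^2 / b := by
  rw [div_add_div _ _ ha.ne' hb.ne', div_le_div_iff₀ (by positivity) (by positivity)]
  nlinarith [sq_nonneg (A * b - B * a)]



/-- If d is not constant on R (and |R| ≥ 2), then R₊ = {d_i ≤ m} and
R₋ = {d_i > m} are both nonempty, forming a cutting of R whose exact refinement
indicator satisfies ΔJ ≥ (∑_{i∈R} |m − d_i|)²/(2p) > 0. -/
theorem nonconstant_region_admits_decreasing_cutting {ι : Type*} [DecidableEq ι]
    (R : Finset ι) (hR : R.Nonempty) (hcard : 2 ≤ R.card) (d : ι → ℝ)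
    (hnc : ∃ i ∈ R, ∃ j ∈ R, d i ≠ d j) :
    let m := (∑ i ∈ R, d i) / R.card
    let Rp := R.filter fun i => d i ≤ m
    let Rm := R.filter fun i => m < d i
    let cp := (∑ i ∈ Rp, d i) / Rp.card
    let cm := (∑ i ∈ Rm, d i) / Rm.card
    let ΔJ := (1/2) * ∑ i ∈ R, (d i - m)^2
          - (1/2) * ((∑ i ∈ Rp, (d i - cp)^2) + ∑ i ∈ Rm, (d i - cm)^2)
    Rp.Nonempty ∧ Rm.Nonempty ∧
      (∑ i ∈ R, |m - d i|)^2 / (2 * (R.card : ℝ)) ≤ ΔJ ∧ 0 < ΔJ := by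
  intro m Rp Rm cp cm ΔJ
  have hp : (R.card : ℝ) ≠ 0 := by exact_mod_cast hR.card_pos.ne'
  have h0 : ∑ i ∈ R, (d i - m) = 0 := by
    simp only [Finset.sum_sub_distrib, Finset.sum_const, nsmul_eq_mul, m]
    field_simp
    ring
  have hm : Rm.Nonempty := by
    by_contra hne
    rw [Finset.not_nonempty_iff_eq_empty, Finset.filter_eq_empty_iff] at hne
    have h1 : ∀ i ∈ R, d i - m = 0 :=
      (Finset.sum_eq_zero_iff_of_nonpos (fun i hi => by linarith [not_lt.1 (hne hi)])).1 h0
    obtain ⟨i, hi, j, hj, hij⟩ := hnc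
    exact hij (by linarith [h1 i hi, h1 j hj])
  have hpn : Rp.Nonempty := by
    by_contra hne
    rw [Finset.not_nonempty_iff_eq_empty, Finset.filter_eq_empty_iff] at hne
    have := Finset.sum_pos (fun i hi => sub_pos.2 (not_le.1 (hne hi))) hR
    linarith
  have split : ∀ f : ι → ℝ, ∑ i ∈ R, f i = ∑ i ∈ Rp, f i + ∑ i ∈ Rm, f i := by
    intro f
    rw [← Finset.sum_filter_add_sum_filter_not R (fun i => d i ≤ m) f]
    simp only [not_le, Rp, Rm]
  have ha : (0 : ℝ) < Rp.card := by exact_mod_cast hpn.card_pos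
  have hb : (0 : ℝ) < Rm.card := by exact_mod_cast hm.card_pos
  have hc : (R.card : ℝ) = Rp.card + Rm.card := by
    have := split (fun _ => 1)
    simpa using this
  have habs : ∑ i ∈ R, |m - d i| = -(∑ i ∈ Rp, (d i - m)) + ∑ i ∈ Rm, (d i - m) := by
    rw [split, ← Finset.sum_neg_distrib]
    congr 1
    · refine Finset.sum_congr rfl fun i hi => ?_
      have := (Finset.mem_filter.1 hi).2
      rw [abs_of_nonneg (by linarith)]
      ring
    · refine Finset.sum_congr rfl fun i hi => ?_
      have := (Finset.mem_filter.1 hi).2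
      rw [abs_of_neg (by linarith)]
      ring
  have hB : 0 < ∑ i ∈ Rm, (d i - m) :=
    Finset.sum_pos (fun i hi => sub_pos.2 (Finset.mem_filter.1 hi).2) hm
  have hAB := split (fun i => d i - m)
  rw [h0] at hAB
  have hJ : ΔJ = (1/2) * ((-(∑ i ∈ Rp, (d i - m)))^2 / Rp.card
      + (∑ i ∈ Rm, (d i - m))^2 / Rm.card) := by
    rw [neg_sq, ← aux_var Rp hpn d m, ← aux_var Rm hm d m]
    simp only [ΔJ]
    rw [split (fun i => (d i - m)^2)]
    simp only [cp, cm]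
    ring
  have hle : (∑ i ∈ R, |m - d i|)^2 / (2 * (R.card : ℝ)) ≤ ΔJ := by
    have h := aux_cs (-(∑ i ∈ Rp, (d i - m))) (∑ i ∈ Rm, (d i - m)) _ _ ha hb
    rw [← habs, ← hc] at h
    have e : (∑ i ∈ R, |m - d i|)^2 / (2 * (R.card : ℝ))
        = (1/2) * ((∑ i ∈ R, |m - d i|)^2 / (R.card : ℝ)) := by
      field_simp
    rw [hJ, e]
    linarith
  refine ⟨hpn, hm, hle, ?_⟩
  rw [hJ]
  have h1 : 0 < (∑ i ∈ Rm, (d i - m))^2 / (Rm.card : ℝ) := div_pos (pow_pos hB 2) hb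
  have h2 : 0 ≤ (-(∑ i ∈ Rp, (d i - m)))^2 / (Rp.card : ℝ) := div_nonneg (sq_nonneg _) ha.le
  linarith
end
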